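/- Assume 1 ≤ n_B ≤ n−1 and 1 ≤ n_N ≤ n−1 and that the gaps g_X = λ_{[n_B]}(X^μ) − λ_{[n_B+1]}(X^μ) and g_S = λ_{[n_N]}(S^μ) − λ_{[n_N+1]}(S^μ) are positive. If |ε| < (1/(θ^μ ‖C̄‖)) · min{ δ^μ/2, 1/(2 θ^μ), g_X/10, g_S/10 }, then there exists a central solution (X^μ(ε), y^μ(ε), S^μ(ε)) of the perturbed problems (P_ε) and (D_ε) with the same μ such that: the n_B largest eigenvalues of X^μ(ε) are strictly larger than its remaining eigenvalues and the n_N largest eigenvalues of S^μ(ε) are strictly larger than its remaining eigenvalues; and, writing R_B^μ, R_B^μ(ε) for the spans of eigenvectors corresponding to the n_B largest eigenvalues of X^μ and X^μ(ε) and R_N^μ, R_N^μ(ε) for the spans of eigenvectors corresponding to the n_N largest eigenvalues of S^μ and S^μ(ε), one has dist(R_B^μ, R_B^μ(ε)) ≤ 4(1 − sqrt(1 − 2|ε| (θ^μ)² ‖C̄‖)) / (θ^μ g_X) and dist(R_N^μ, R_N^μ(ε)) ≤ 4(1 − sqrt(1 − 2|ε| (θ^μ)² ‖C̄‖)) / (θ^μ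 g_S). -/

import Mathlib

open Matrix Set

noncomputable section

variable {n m : ℕ}

/-- Feasibility for the primal SDO problem `(P_ε)` (the feasible set does not depend on `ε`). -/
def PrimalFeasible (A : Fin m → Matrix (Fin n) (Fin n) ℝ) (b : Fin m → ℝ)
    (X : Matrix (Fin n) (Fin n) ℝ) : Prop :=
  X.IsSymm ∧ (∀ i, ((A i) * X).trace = b i) ∧ X.PosSemidef

/-- Feasibility for the dual SDO problem `(D_ε)`. -/
def DualFeasible (C Cbar : Matrix (Fin n) (Fin n) ℝ)
    (A : Fin m → Matrix (Fin n) (Fin n) ℝ) (ε : ℝ)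
    (y : Fin m → ℝ) (S : Matrix (Fin n) (Fin n) ℝ) : Prop :=
  S.IsSymm ∧ (∑ i, y i • A i) + S = C + ε • Cbar ∧ S.PosSemidef

/-- The optimal value function `v(ε)` of `(P_ε)`, with values in `EReal`. -/
def vfun (C Cbar : Matrix (Fin n) (Fin n) ℝ) (A : Fin m → Matrix (Fin n) (Fin n) ℝ)
    (b : Fin m → ℝ) (ε : ℝ) : EReal :=
  sInf ((fun X => (((C + ε • Cbar) * X).trace : EReal)) '' {X | PrimalFeasible A b X})

/-- `E = {ε : v(ε) > -∞}`. -/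
def Eset (C Cbar : Matrix (Fin n) (Fin n) ℝ) (A : Fin m → Matrix (Fin n) (Fin n) ℝ)
    (b : Fin m → ℝ) : Set ℝ :=
  {ε | ⊥ < vfun C Cbar A b ε}

/-- The primal optimal set `P*(ε)`. -/
def PrimalOpt (C Cbar : Matrix (Fin n) (Fin n) ℝ) (A : Fin m → Matrix (Fin n) (Fin n) ℝ)
    (b : Fin m → ℝ) (ε : ℝ) : Set (Matrix (Fin n) (Fin n) ℝ) :=
  {X | PrimalFeasible A b X ∧ ∀ X', PrimalFeasible A b X' →
    ((C + ε • Cbar) * X).trace ≤ ((C + ε • Cbar) * X').trace}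

/-- The dual optimal set `D*(ε)`. -/
def DualOpt (C Cbar : Matrix (Fin n) (Fin n) ℝ) (A : Fin m → Matrix (Fin n) (Fin n) ℝ)
    (b : Fin m → ℝ) (ε : ℝ) : Set ((Fin m → ℝ) × Matrix (Fin n) (Fin n) ℝ) :=
  {p | DualFeasible C Cbar A ε p.1 p.2 ∧ ∀ y' S', DualFeasible C Cbar A ε y' S' →
    ∑ i, b i * y' i ≤ ∑ i, b i * p.1 i}

/-- A maximally complementary optimal solution: `X` lies in the relative interior of `P*(ε)`
and `(y, S)` in the relative interior of `D*(ε)`. -/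
def MaxComp (C Cbar : Matrix (Fin n) (Fin n) ℝ) (A : Fin m → Matrix (Fin n) (Fin n) ℝ)
    (b : Fin m → ℝ) (ε : ℝ) (X : Matrix (Fin n) (Fin n) ℝ) (y : Fin m → ℝ)
    (S : Matrix (Fin n) (Fin n) ℝ) : Prop :=
  X ∈ intrinsicInterior ℝ (PrimalOpt C Cbar A b ε) ∧
    (y, S) ∈ intrinsicInterior ℝ (DualOpt C Cbar A b ε)

/-- `π(ε) = π(ε')`: the optimal partitions at `ε` and `ε'` coincide, expressed through
maximally complementary solutions (`B = range X*`, `N = range S*`, `T` being determined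
by `B` and `N`). -/
def SamePartition (C Cbar : Matrix (Fin n) (Fin n) ℝ) (A : Fin m → Matrix (Fin n) (Fin n) ℝ)
    (b : Fin m → ℝ) (ε ε' : ℝ) : Prop :=
  ∃ X y S X' y' S', MaxComp C Cbar A b ε X y S ∧ MaxComp C Cbar A b ε' X' y' S' ∧
    LinearMap.range X.mulVecLin = LinearMap.range X'.mulVecLin ∧
    LinearMap.range S.mulVecLin = LinearMap.range S'.mulVecLin

/-- The standing assumptions: symmetric data, linearly independent constraint matrices and
the interior point condition at `ε = 0`. -/
def StandingAssumptions (C Cbar : Matrix (Fin n) (Fin n) ℝ)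
    (A : Fin m → Matrix (Fin n) (Fin n) ℝ) (b : Fin m → ℝ) : Prop :=
  C.IsSymm ∧ Cbar.IsSymm ∧ (∀ i, (A i).IsSymm) ∧ LinearIndependent ℝ A ∧
    ∃ X y S, PrimalFeasible A b X ∧ X.PosDef ∧ DualFeasible C Cbar A 0 y S ∧ S.PosDef

/-- The invariancy set of `ε̄`. -/
def InvSet (C Cbar : Matrix (Fin n) (Fin n) ℝ) (A : Fin m → Matrix (Fin n) (Fin n) ℝ)
    (b : Fin m → ℝ) (εbar : ℝ) : Set ℝ :=
  {ε | ε ∈ interior (Eset C Cbar A b) ∧ SamePartition C Cbar A b ε εbar}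

/-- `dim B(ε) = dim B(ε')` and `dim N(ε) = dim N(ε')`, expressed through maximally
complementary solutions. -/
def DimsMatch (C Cbar : Matrix (Fin n) (Fin n) ℝ) (A : Fin m → Matrix (Fin n) (Fin n) ℝ)
    (b : Fin m → ℝ) (ε ε' : ℝ) : Prop :=
  ∀ X y S X' y' S', MaxComp C Cbar A b ε X y S → MaxComp C Cbar A b ε' X' y' S' →
    Module.finrank ℝ (LinearMap.range X.mulVecLin) =
        Module.finrank ℝ (LinearMap.range X'.mulVecLin) ∧
      Module.finrank ℝ (LinearMap.range S.mulVecLin) =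
        Module.finrank ℝ (LinearMap.range S'.mulVecLin)

/-- A transition point: a singleton invariancy set such that every neighborhood contains a
parameter at which `dim B` or `dim N` differs. -/
def IsTransitionPoint (C Cbar : Matrix (Fin n) (Fin n) ℝ) (A : Fin m → Matrix (Fin n) (Fin n) ℝ)
    (b : Fin m → ℝ) (εbar : ℝ) : Prop :=
  εbar ∈ interior (Eset C Cbar A b) ∧
    (∀ ε ∈ interior (Eset C Cbar A b), ε ≠ εbar → ¬ SamePartition C Cbar A b ε εbar) ∧
    ∀ ξ : ℝ, 0 < ξ → ∃ ε ∈ Set.Ioo (εbar - ξ) (εbar + ξ) ∩ interior (Eset C Cbar A b),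
      ¬ DimsMatch C Cbar A b ε εbar

/-- Existence of a strictly complementary optimal solution at `ε`. -/
def HasStrictComp (C Cbar : Matrix (Fin n) (Fin n) ℝ) (A : Fin m → Matrix (Fin n) (Fin n) ℝ)
    (b : Fin m → ℝ) (ε : ℝ) : Prop :=
  ∃ X y S, X ∈ PrimalOpt C Cbar A b ε ∧ (y, S) ∈ DualOpt C Cbar A b ε ∧ (X + S).PosDef

/-- Nonsingularity of the Jacobian `J(X, y, S)` of the optimality system, as a linear map on
`S^n × ℝ^m × S^n`: only the trivial symmetric triple is mapped to zero. -/
def JNonsingular (A : Fin m → Matrix (Fin n) (Fin n) ℝ)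
    (X S : Matrix (Fin n) (Fin n) ℝ) : Prop :=
  ∀ (DX DS : Matrix (Fin n) (Fin n) ℝ) (Dy : Fin m → ℝ), DX.IsSymm → DS.IsSymm →
    (∀ i, ((A i) * DX).trace = 0) → ((∑ i, Dy i • A i) + DS = 0) →
    (DX * S + S * DX + X * DS + DS * X = 0) → DX = 0 ∧ Dy = 0 ∧ DS = 0

/-- Primal nondegeneracy of a primal feasible `X`. -/
def PrimalNondeg (A : Fin m → Matrix (Fin n) (Fin n) ℝ)
    (X : Matrix (Fin n) (Fin n) ℝ) : Prop :=
  ∃ (r : ℕ) (M₁ : Matrix (Fin n) (Fin r) ℝ) (M₂ : Matrix (Fin n) (Fin (n - r)) ℝ),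
    M₁ᵀ * M₁ = 1 ∧ M₂ᵀ * M₂ = 1 ∧ M₁ᵀ * M₂ = 0 ∧
    LinearMap.range M₁.mulVecLin = LinearMap.range X.mulVecLin ∧
    LinearIndependent ℝ (fun i =>
      Matrix.fromBlocks (M₁ᵀ * (A i) * M₁) (M₁ᵀ * (A i) * M₂) (M₂ᵀ * (A i) * M₁) 0)

/-- Dual nondegeneracy of a dual feasible `(y, S)` (the condition involves only `S`). -/
def DualNondeg (A : Fin m → Matrix (Fin n) (Fin n) ℝ)
    (S : Matrix (Fin n) (Fin n) ℝ) : Prop :=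
  ∃ (k : ℕ) (N₁ : Matrix (Fin n) (Fin k) ℝ),
    N₁ᵀ * N₁ = 1 ∧ LinearMap.range N₁.mulVecLin = LinearMap.ker S.mulVecLin ∧
    ∀ W : Matrix (Fin k) (Fin k) ℝ, W.IsSymm →
      W ∈ Submodule.span ℝ (Set.range fun i => N₁ᵀ * (A i) * N₁)

/-- A central solution with parameter `μ` for the problems `(P_ε)` and `(D_ε)`. -/
def CentralSol (C Cbar : Matrix (Fin n) (Fin n) ℝ) (A : Fin m → Matrix (Fin n) (Fin n) ℝ)
    (b : Fin m → ℝ) (ε μ : ℝ) (X : Matrix (Fin n) (Fin n) ℝ) (y : Fin m → ℝ)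
    (S : Matrix (Fin n) (Fin n) ℝ) : Prop :=
  PrimalFeasible A b X ∧ DualFeasible C Cbar A ε y S ∧
    X * S = μ • (1 : Matrix (Fin n) (Fin n) ℝ)

/-- The Frobenius norm of a matrix. -/
def frobNorm {α β : Type*} [Fintype α] [Fintype β] (M : Matrix α β ℝ) : ℝ :=
  Real.sqrt (∑ i, ∑ j, (M i j) ^ 2)

/-- The spectral norm (induced 2-norm) of a square matrix. -/
def specNorm {N : ℕ} (M : Matrix (Fin N) (Fin N) ℝ) : ℝ :=
  ‖LinearMap.toContinuousLinearMap (Matrix.toEuclideanLin M)‖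

/-- The smallest eigenvalue of a symmetric matrix, via the Rayleigh quotient. -/
def lamMin {k : ℕ} (M : Matrix (Fin k) (Fin k) ℝ) : ℝ :=
  sInf {r : ℝ | ∃ x : Fin k → ℝ, (∑ i, (x i) ^ 2) = 1 ∧ r = x ⬝ᵥ M.mulVec x}

/-- `θ^μ`: the operator norm of the inverse of the Jacobian `J(X, y, S)` on
`S^n × ℝ^m × S^n`, characterized as the least constant `t ≥ 0` with
`‖(ΔX, Δy, ΔS)‖ ≤ t * ‖J(X,y,S)(ΔX, Δy, ΔS)‖` for all symmetric `ΔX`, `ΔS`. -/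
def thetaMu (A : Fin m → Matrix (Fin n) (Fin n) ℝ)
    (X S : Matrix (Fin n) (Fin n) ℝ) : ℝ :=
  sInf {t : ℝ | 0 ≤ t ∧ ∀ (DX DS : Matrix (Fin n) (Fin n) ℝ) (Dy : Fin m → ℝ),
    DX.IsSymm → DS.IsSymm →
    Real.sqrt (frobNorm DX ^ 2 + (∑ i, (Dy i) ^ 2) + frobNorm DS ^ 2) ≤
      t * Real.sqrt ((∑ i, (((A i) * DX).trace) ^ 2) +
        frobNorm ((∑ i, Dy i • A i) + DS) ^ 2 +
        frobNorm ((1 / 2 : ℝ) • (DX * S + S * DX + X * DS + DS * X)) ^ 2)}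

/-- A nonlinearity interval: a non-singleton open subinterval of `int(E)`, of maximal length,
on which `dim B(·)` and `dim N(·)` are constant while the optimal partition `π(·)` varies. -/
def IsNonlinearityInterval (C Cbar : Matrix (Fin n) (Fin n) ℝ)
    (A : Fin m → Matrix (Fin n) (Fin n) ℝ) (b : Fin m → ℝ) (I : Set ℝ) : Prop :=
  I ⊆ interior (Eset C Cbar A b) ∧ IsOpen I ∧ I.OrdConnected ∧
    (∃ a ∈ I, ∃ c ∈ I, a ≠ c) ∧
    (∀ ε ∈ I, ∀ ε' ∈ I, DimsMatch C Cbar A b ε ε') ∧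
    ¬ (∀ ε ∈ I, ∀ ε' ∈ I, SamePartition C Cbar A b ε ε') ∧
    ∀ I' : Set ℝ, I ⊆ I' → I' ⊆ interior (Eset C Cbar A b) → IsOpen I' → I'.OrdConnected →
      (∀ ε ∈ I', ∀ ε' ∈ I', DimsMatch C Cbar A b ε ε') → I' = I

end

/-!
For `ΔX`, `Δy`, `ΔS` the perturbed optimality system reads `J D + Q D = (0, 0, ε C̄)` with `J` the
Jacobian at the unperturbed central solution and `Q` the quadratic map `(ΔX ∘ ΔS, 0, 0)`, where `∘`
is the Jordan product. As `‖J⁻¹‖ ≤ θ` and `Q` has norm at most `1/2`, the contraction principle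
gives a solution in the ball whose radius `r = (1 - √(1 - 2 |ε| θ² ‖C̄‖)) / θ` solves
`θ (|ε| ‖C̄‖ + r² / 2) = r`. Following the solutions for `s ε`, `0 ≤ s ≤ 1`, the matrix `X + ΔX`
never becomes singular, so it stays positive definite and commutes with `S + ΔS`: the solution is
central. Finally `2 r` is smaller than the spectral gaps, so Weyl's inequality keeps the eigenvalues
separated and a Davis-Kahan estimate bounds the distance of the dominant eigenspaces by `2 r / g`.
-/

section Frobenius

open scoped Matrix.Norms.Frobenius

variable {ι κ : Type*} [Fintype ι] [Fintype κ]

theorem frobNorm_eq_norm (M : Matrix ι κ ℝ) : frobNorm M = ‖M‖ := by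
  simp [frobenius_norm_def, frobNorm, Real.sqrt_eq_rpow]

theorem frobenius_norm_sq_eq_sum (M : Matrix ι κ ℝ) : ‖M‖ ^ 2 = ∑ i, ∑ j, M i j ^ 2 := by
  rw [← frobNorm_eq_norm, frobNorm, Real.sq_sqrt (by positivity)]

theorem abs_apply_le_frobenius_norm (M : Matrix ι κ ℝ) (i : ι) (j : κ) : |M i j| ≤ ‖M‖ := by
  refine abs_le_of_sq_le_sq ?_ (norm_nonneg M)
  rw [frobenius_norm_sq_eq_sum]
  exact (Finset.single_le_sum (fun j _ => sq_nonneg (M i j)) (Finset.mem_univ j)).trans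
    (Finset.single_le_sum (f := fun i => ∑ j, M i j ^ 2) (fun i _ => by positivity)
      (Finset.mem_univ i))

theorem frobenius_norm_sq_eq_trace (M : Matrix ι κ ℝ) : ‖M‖ ^ 2 = (Mᵀ * M).trace := by
  rw [frobenius_norm_sq_eq_sum, Finset.sum_comm]
  simp [trace, mul_apply, sq]

theorem sum_mulVec_sq_le (M : Matrix ι κ ℝ) (x : κ → ℝ) :
    ∑ i, (M *ᵥ x) i ^ 2 ≤ ‖M‖ ^ 2 * ∑ j, x j ^ 2 := by
  rw [frobenius_norm_sq_eq_sum, Finset.sum_mul]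
  exact Finset.sum_le_sum fun i _ => Finset.sum_mul_sq_le_sq_mul_sq _ (M i) x

theorem specNorm_le_frobenius_norm {N : ℕ} (M : Matrix (Fin N) (Fin N) ℝ) :
    specNorm M ≤ ‖M‖ := by
  refine ContinuousLinearMap.opNorm_le_bound _ (norm_nonneg _) fun x => ?_
  rw [← sq_le_sq₀ (norm_nonneg _) (by positivity), mul_pow, EuclideanSpace.norm_sq_eq,
    EuclideanSpace.norm_sq_eq]
  simpa using sum_mulVec_sq_le M x.ofLp

theorem dotProduct_mulVec_le_frobenius_norm (M : Matrix ι ι ℝ) (x : ι → ℝ) :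
    x ⬝ᵥ M *ᵥ x ≤ ‖M‖ * (x ⬝ᵥ x) := by
  have hx : x ⬝ᵥ x = ∑ i, x i ^ 2 := by simp only [dotProduct, sq]
  rw [hx]
  refine le_of_sq_le_sq ?_ (by positivity)
  calc (x ⬝ᵥ M *ᵥ x) ^ 2
      ≤ (∑ i, x i ^ 2) * ∑ i, (M *ᵥ x) i ^ 2 := Finset.sum_mul_sq_le_sq_mul_sq _ _ _
    _ ≤ (∑ i, x i ^ 2) * (‖M‖ ^ 2 * ∑ i, x i ^ 2) := by
        gcongr
        exact sum_mulVec_sq_le M x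
    _ = (‖M‖ * ∑ i, x i ^ 2) ^ 2 := by ring

variable [DecidableEq ι] [DecidableEq κ]

theorem frobenius_norm_transpose_mul_mul {U : Matrix ι ι ℝ} {V : Matrix κ κ ℝ}
    (hU : Uᵀ * U = 1) (hV : Vᵀ * V = 1) (M : Matrix ι κ ℝ) : ‖Uᵀ * M * V‖ = ‖M‖ := by
  rw [← sq_eq_sq₀ (norm_nonneg _) (norm_nonneg _), frobenius_norm_sq_eq_trace,
    frobenius_norm_sq_eq_trace]
  calc ((Uᵀ * M * V)ᵀ * (Uᵀ * M * V)).trace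
      = (Vᵀ * (Mᵀ * (U * Uᵀ) * M * V)).trace := by
        simp only [transpose_mul, transpose_transpose, Matrix.mul_assoc]
    _ = (Mᵀ * M * (V * Vᵀ)).trace := by
        rw [mul_eq_one_comm.mp hU, Matrix.mul_one, trace_mul_comm, Matrix.mul_assoc _ V]
    _ = (Mᵀ * M).trace := by rw [mul_eq_one_comm.mp hV, Matrix.mul_one]

end Frobenius

section SortedDiagonalization

open scoped Matrix.Norms.Frobenius

/-- An orthogonal diagonalization `M = Q diag(φ) Qᵀ` of a real matrix, recorded as `M Q = Q diag(φ)`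
with `Q` orthogonal, whose eigenvalues `φ` are listed in non-increasing order. -/
structure IsSortedDiagonalization {ι : Type*} [Fintype ι] [DecidableEq ι] [Preorder ι]
    (M Q : Matrix ι ι ℝ) (φ : ι → ℝ) : Prop where
  antitone : Antitone φ
  orthogonal : Qᵀ * Q = 1
  mul_eq : M * Q = Q * diagonal φ

theorem exists_isSortedDiagonalization {n : ℕ} {M : Matrix (Fin n) (Fin n) ℝ} (hM : M.IsSymm) :
    ∃ Q φ, IsSortedDiagonalization M Q φ := by
  have hH : M.IsHermitian := by rwa [IsHermitian, conjTranspose_eq_transpose_of_trivial]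
  let U : Matrix (Fin n) (Fin n) ℝ := hH.eigenvectorUnitary
  let σ := Tuple.sort fun i => -hH.eigenvalues i
  have hU : Uᵀ * U = 1 := by
    simpa [star_eq_conjTranspose] using mem_unitaryGroup_iff'.mp hH.eigenvectorUnitary.2
  have hMU : M * U = U * diagonal hH.eigenvalues := by
    ext i j
    rw [mul_diagonal, mul_comm]
    exact congrFun (hH.mulVec_eigenvectorBasis j) i
  refine ⟨U.submatrix id σ, hH.eigenvalues ∘ σ, fun i j hij => ?_, ?_, ?_⟩
  · exact neg_le_neg_iff.mp (Tuple.monotone_sort (fun i => -hH.eigenvalues i) hij)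
  · calc (U.submatrix id σ)ᵀ * U.submatrix id σ = (Uᵀ * U).submatrix σ σ := rfl
      _ = 1 := by rw [hU, submatrix_one_equiv]
  · calc M * U.submatrix id σ = (M * U).submatrix id σ := rfl
      _ = U.submatrix id σ * diagonal (hH.eigenvalues ∘ σ) := by
        ext i j
        rw [hMU]
        simp [mul_diagonal]

-- These are fewer than `card ι` linear conditions on `x`.
theorem exists_ne_zero_transpose_mulVec_eq_zero {ι : Type*} [Fintype ι] [LinearOrder ι]
    (Q P : Matrix ι ι ℝ) (k : ι) :
    ∃ x ≠ 0, (∀ i < k, (Qᵀ *ᵥ x) i = 0) ∧ ∀ i, k < i → (Pᵀ *ᵥ x) i = 0 := by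
  let f : (ι → ℝ) →ₗ[ℝ] ({i // i ≠ k} → ℝ) :=
    LinearMap.pi fun i => LinearMap.proj i.1 ∘ₗ if i < k then Qᵀ.mulVecLin else Pᵀ.mulVecLin
  have hcard : Fintype.card {i // i ≠ k} < Fintype.card ι :=
    Fintype.card_subtype_lt (x := k) (by simp)
  obtain ⟨x, hx, hx0⟩ := Submodule.exists_mem_ne_zero_of_ne_bot
    (LinearMap.ker_ne_bot_of_finrank_lt (f := f) (by simpa using hcard))
  refine ⟨x, hx0, fun i hi => ?_, fun i hi => ?_⟩
  · simpa [f, hi, -mulVecLin_transpose] using congrFun (LinearMap.mem_ker.mp hx) ⟨i, hi.ne⟩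
  · simpa [f, hi.not_gt, -mulVecLin_transpose] using congrFun (LinearMap.mem_ker.mp hx) ⟨i, hi.ne'⟩

theorem norm_sq_mul_diagonal_mul_sub {ι : Type*} [Fintype ι] [DecidableEq ι] {Q P : Matrix ι ι ℝ}
    (hQ : Qᵀ * Q = 1) (hP : Pᵀ * P = 1) (d d' : ι → ℝ) :
    ‖Q * diagonal d * Qᵀ - P * diagonal d' * Pᵀ‖ ^ 2 =
      ∑ i, ∑ j, ((d i - d' j) * (Qᵀ * P) i j) ^ 2 := by
  have hconj : Qᵀ * (Q * diagonal d * Qᵀ - P * diagonal d' * Pᵀ) * P =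
      diagonal d * (Qᵀ * P) - Qᵀ * P * diagonal d' := by
    calc Qᵀ * (Q * diagonal d * Qᵀ - P * diagonal d' * Pᵀ) * P
        = Qᵀ * Q * diagonal d * (Qᵀ * P) - Qᵀ * P * diagonal d' * (Pᵀ * P) := by
          simp only [Matrix.mul_sub, Matrix.sub_mul, Matrix.mul_assoc]
      _ = diagonal d * (Qᵀ * P) - Qᵀ * P * diagonal d' := by
          rw [hQ, hP, Matrix.one_mul, Matrix.mul_one]
  rw [← frobenius_norm_transpose_mul_mul hQ hP, hconj, frobenius_norm_sq_eq_sum]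
  refine Finset.sum_congr rfl fun i _ => Finset.sum_congr rfl fun j _ => ?_
  rw [Matrix.sub_apply, diagonal_mul, mul_diagonal]
  ring

theorem submatrix_castLE_mul_transpose {α R : Type*} [NonAssocSemiring R] {n k : ℕ} (h : k ≤ n)
    (Q : Matrix α (Fin n) R) :
    Q.submatrix id (Fin.castLE h) * (Q.submatrix id (Fin.castLE h))ᵀ =
      Q * diagonal (fun i : Fin n => if (i : ℕ) < k then (1 : R) else 0) * Qᵀ := by
  obtain ⟨l, rfl⟩ := Nat.exists_eq_add_of_le h
  ext a b
  simp only [mul_apply (N := Qᵀ), mul_apply (N := (Q.submatrix _ _)ᵀ), mul_diagonal,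
    submatrix_apply, transpose_apply, id, mul_ite, mul_one, mul_zero, ite_mul, zero_mul]
  rw [Fin.sum_univ_add]
  simp [Fin.castLE]
  rfl

namespace IsSortedDiagonalization

section LinearOrder

variable {ι : Type*} [Fintype ι] [LinearOrder ι] {M M' Q P : Matrix ι ι ℝ} {φ ν : ι → ℝ}

theorem eq_mul_mul_transpose (h : IsSortedDiagonalization M Q φ) : M = Q * diagonal φ * Qᵀ := by
  rw [← h.mul_eq, Matrix.mul_assoc, mul_eq_one_comm.mp h.orthogonal, Matrix.mul_one]

theorem dotProduct_self (h : IsSortedDiagonalization M Q φ) (x : ι → ℝ) :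
    x ⬝ᵥ x = ∑ i, (Qᵀ *ᵥ x) i ^ 2 := by
  have hQ : (Qᵀ *ᵥ x) ⬝ᵥ (Qᵀ *ᵥ x) = x ⬝ᵥ x := by
    rw [dotProduct_mulVec, vecMul_transpose, mulVec_mulVec, mul_eq_one_comm.mp h.orthogonal,
      one_mulVec]
  rw [← hQ]
  simp only [dotProduct, sq]

theorem dotProduct_mulVec_self (h : IsSortedDiagonalization M Q φ) (x : ι → ℝ) :
    x ⬝ᵥ M *ᵥ x = ∑ i, φ i * (Qᵀ *ᵥ x) i ^ 2 := by
  rw [h.eq_mul_mul_transpose, ← mulVec_mulVec, ← mulVec_mulVec, dotProduct_mulVec,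
    ← mulVec_transpose]
  refine Finset.sum_congr rfl fun i _ => ?_
  rw [mulVec_diagonal]
  ring

theorem dotProduct_mulVec_le (h : IsSortedDiagonalization M Q φ) {k : ι} {x : ι → ℝ}
    (hx : ∀ i < k, (Qᵀ *ᵥ x) i = 0) : x ⬝ᵥ M *ᵥ x ≤ φ k * (x ⬝ᵥ x) := by
  rw [h.dotProduct_mulVec_self, h.dotProduct_self, Finset.mul_sum]
  refine Finset.sum_le_sum fun i _ => ?_
  obtain hi | hi := lt_or_ge i k
  · simp [hx i hi]
  · exact mul_le_mul_of_nonneg_right (h.antitone hi) (sq_nonneg _)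

theorem le_dotProduct_mulVec (h : IsSortedDiagonalization M Q φ) {k : ι} {x : ι → ℝ}
    (hx : ∀ i, k < i → (Qᵀ *ᵥ x) i = 0) : φ k * (x ⬝ᵥ x) ≤ x ⬝ᵥ M *ᵥ x := by
  rw [h.dotProduct_mulVec_self, h.dotProduct_self, Finset.mul_sum]
  refine Finset.sum_le_sum fun i _ => ?_
  obtain hi | hi := lt_or_ge k i
  · simp [hx i hi]
  · exact mul_le_mul_of_nonneg_right (h.antitone hi) (sq_nonneg _)

theorem eigenvalue_le_add_norm_sub (h : IsSortedDiagonalization M Q φ)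
    (h' : IsSortedDiagonalization M' P ν) (k : ι) : ν k ≤ φ k + ‖M' - M‖ := by
  obtain ⟨x, hx0, hxQ, hxP⟩ := exists_ne_zero_transpose_mulVec_eq_zero Q P k
  have hxx : 0 < x ⬝ᵥ x := by simpa using dotProduct_star_self_pos_iff.mpr hx0
  refine le_of_mul_le_mul_right ?_ hxx
  calc ν k * (x ⬝ᵥ x) ≤ x ⬝ᵥ M' *ᵥ x := h'.le_dotProduct_mulVec hxP
    _ = x ⬝ᵥ M *ᵥ x + x ⬝ᵥ (M' - M) *ᵥ x := by rw [sub_mulVec, dotProduct_sub]; ring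
    _ ≤ φ k * (x ⬝ᵥ x) + ‖M' - M‖ * (x ⬝ᵥ x) :=
        add_le_add (h.dotProduct_mulVec_le hxQ) (dotProduct_mulVec_le_frobenius_norm _ x)
    _ = (φ k + ‖M' - M‖) * (x ⬝ᵥ x) := by ring

theorem mul_norm_mul_diagonal_mul_sub_le (h : IsSortedDiagonalization M Q φ)
    (h' : IsSortedDiagonalization M' P ν) {c : ℝ} (hc : 0 ≤ c) {d : ι → ℝ}
    (hd : ∀ i j, c * |d i - d j| ≤ |φ i - ν j|) :
    c * ‖Q * diagonal d * Qᵀ - P * diagonal d * Pᵀ‖ ≤ ‖M - M'‖ := by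
  rw [← sq_le_sq₀ (by positivity) (norm_nonneg _), mul_pow, h.eq_mul_mul_transpose,
    h'.eq_mul_mul_transpose, norm_sq_mul_diagonal_mul_sub h.orthogonal h'.orthogonal,
    norm_sq_mul_diagonal_mul_sub h.orthogonal h'.orthogonal, Finset.mul_sum]
  refine Finset.sum_le_sum fun i _ => ?_
  rw [Finset.mul_sum]
  refine Finset.sum_le_sum fun j _ => ?_
  have hij := pow_le_pow_left₀ (by positivity) (hd i j) 2
  rw [mul_pow, sq_abs, sq_abs] at hij
  calc c ^ 2 * ((d i - d j) * (Qᵀ * P) i j) ^ 2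
      = c ^ 2 * (d i - d j) ^ 2 * (Qᵀ * P) i j ^ 2 := by ring
    _ ≤ (φ i - ν j) ^ 2 * (Qᵀ * P) i j ^ 2 := by gcongr
    _ = ((φ i - ν j) * (Qᵀ * P) i j) ^ 2 := by ring

end LinearOrder

section Fin

variable {n k : ℕ} {M M' Q P : Matrix (Fin n) (Fin n) ℝ} {φ ν : Fin n → ℝ} {g t : ℝ}

theorem eigenvalue_lt_of_norm_sub_le (h : IsSortedDiagonalization M Q φ)
    (h' : IsSortedDiagonalization M' P ν) {i j : Fin n} (ht : ‖M' - M‖ ≤ t)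
    (hg : 2 * t < φ i - φ j) : ν j < ν i := by
  have hj : ν j ≤ φ j + ‖M' - M‖ := h.eigenvalue_le_add_norm_sub h' j
  have hi : φ i ≤ ν i + ‖M - M'‖ := h'.eigenvalue_le_add_norm_sub h i
  rw [norm_sub_rev] at hi
  linarith

theorem mul_abs_ite_sub_ite_le (h : IsSortedDiagonalization M Q φ)
    (h' : IsSortedDiagonalization M' P ν) (hk : 1 ≤ k) (hkn : k < n)
    (hg : g = φ ⟨k - 1, by omega⟩ - φ ⟨k, hkn⟩) (ht : ‖M' - M‖ ≤ t) (i j : Fin n) :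
    (g - t) * |(if (i : ℕ) < k then 1 else 0) - (if (j : ℕ) < k then 1 else 0)| ≤
      |φ i - ν j| := by
  have hlow : φ ⟨k - 1, by omega⟩ ≤ ν ⟨k - 1, by omega⟩ + t :=
    (h'.eigenvalue_le_add_norm_sub h _).trans (by rw [norm_sub_rev]; gcongr)
  have hupp : ν ⟨k, hkn⟩ ≤ φ ⟨k, hkn⟩ + t :=
    (h.eigenvalue_le_add_norm_sub h' _).trans (by gcongr)
  have hpre {ξ : Fin n → ℝ} (hξ : Antitone ξ) {l : Fin n} (hl : (l : ℕ) < k) :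
      ξ ⟨k - 1, by omega⟩ ≤ ξ l := hξ (Fin.mk_le_mk.mpr (by omega))
  have hsuf {ξ : Fin n → ℝ} (hξ : Antitone ξ) {l : Fin n} (hl : ¬(l : ℕ) < k) :
      ξ l ≤ ξ ⟨k, hkn⟩ := hξ (Fin.mk_le_mk.mpr (by omega))
  split_ifs with hi hj hj
  · simp
  · rw [sub_zero, abs_one, mul_one]
    linarith [le_abs_self (φ i - ν j), hpre h.antitone hi, hsuf h'.antitone hj]
  · rw [zero_sub, abs_neg, abs_one, mul_one]
    linarith [neg_le_abs (φ i - ν j), hsuf h.antitone hi, hpre h'.antitone hj]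
  · simp

theorem specNorm_sub_le (h : IsSortedDiagonalization M Q φ)
    (h' : IsSortedDiagonalization M' P ν) (hk : 1 ≤ k) (hkn : k < n)
    (hg : g = φ ⟨k - 1, by omega⟩ - φ ⟨k, hkn⟩) (ht : ‖M' - M‖ ≤ t) (htg : 2 * t < g) :
    specNorm (Q.submatrix id (Fin.castLE hkn.le) * (Q.submatrix id (Fin.castLE hkn.le))ᵀ -
      P.submatrix id (Fin.castLE hkn.le) * (P.submatrix id (Fin.castLE hkn.le))ᵀ) ≤ 2 * t / g := by
  have ht0 : 0 ≤ t := (norm_nonneg _).trans ht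
  rw [submatrix_castLE_mul_transpose, submatrix_castLE_mul_transpose]
  set D := diagonal fun i : Fin n => if (i : ℕ) < k then (1 : ℝ) else 0
  have hdiff : (g - t) * ‖Q * D * Qᵀ - P * D * Pᵀ‖ ≤ t :=
    (h.mul_norm_mul_diagonal_mul_sub_le h' (by linarith)
      (h.mul_abs_ite_sub_ite_le h' hk hkn hg ht)).trans (by rwa [norm_sub_rev])
  refine (specNorm_le_frobenius_norm _).trans ?_
  rw [le_div_iff₀ (by linarith)]
  nlinarith [mul_nonneg (sub_nonneg.mpr htg.le) (norm_nonneg (Q * D * Qᵀ - P * D * Pᵀ))]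

end Fin

end IsSortedDiagonalization

end SortedDiagonalization

section PositiveDefinite

variable {ι : Type*} [Fintype ι]

theorem isOpen_setOf_forall_dotProduct_mulVec_pos :
    IsOpen {M : Matrix ι ι ℝ | ∀ x ≠ 0, 0 < x ⬝ᵥ M *ᵥ x} := by
  have hsphere (M : Matrix ι ι ℝ) :
      (∀ x ≠ 0, 0 < x ⬝ᵥ M *ᵥ x) ↔ ∀ x ∈ Metric.sphere (0 : ι → ℝ) 1, 0 < x ⬝ᵥ M *ᵥ x := by
    refine ⟨fun h x hx => h x (ne_zero_of_mem_unit_sphere ⟨x, hx⟩), fun h x hx => ?_⟩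
    have hpos := h (‖x‖⁻¹ • x) (by simp [norm_smul, hx])
    rw [mulVec_smul, smul_dotProduct, dotProduct_smul] at hpos
    exact pos_of_smul_pos_left (pos_of_smul_pos_left hpos (by positivity)) (by positivity)
  simp only [hsphere]
  refine isOpen_iff_eventually.mpr fun M hM =>
    (isCompact_sphere _ _).eventually_forall_of_forall_eventually fun x hx => ?_
  exact continuousAt_const.eventually_lt (g := fun p : Matrix ι ι ℝ × (ι → ℝ) =>
    p.2 ⬝ᵥ p.1 *ᵥ p.2) (by fun_prop) (hM x hx)

theorem eq_zero_of_posDef_of_mul_add_mul_eq_zero {X M : Matrix ι ι ℝ} (hX : X.PosDef)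
    (h : X * M + M * X = 0) : M = 0 := by
  classical
  have hleft : (Mᵀ * X * M).PosSemidef := by
    simpa using hX.posSemidef.conjTranspose_mul_mul_same M
  have hright : (M * X * Mᵀ).PosSemidef := by
    simpa using hX.posSemidef.mul_mul_conjTranspose_same M
  have htrace : (Mᵀ * X * M).trace + (M * X * Mᵀ).trace = 0 := by
    calc (Mᵀ * X * M).trace + (M * X * Mᵀ).trace = (Mᵀ * (X * M + M * X)).trace := by
          rw [Matrix.mul_add, trace_add, Matrix.mul_assoc, trace_mul_comm (M * X)]
      _ = 0 := by rw [h, Matrix.mul_zero, trace_zero]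
  have hzero : Mᵀ * X * M = 0 :=
    hleft.trace_eq_zero_iff.mp (by linarith [hleft.trace_nonneg, hright.trace_nonneg])
  refine ext_of_mulVec_single fun i => ?_
  rw [zero_mulVec]
  by_contra hMx
  refine (hX.dotProduct_mulVec_pos hMx).ne' ?_
  rw [star_trivial, dotProduct_mulVec, vecMul_mulVec, ← dotProduct_mulVec, mulVec_mulVec, hzero,
    zero_mulVec, dotProduct_zero]

variable [DecidableEq ι]

-- A limit of positive definite matrices is positive semidefinite, hence positive definite if it is
-- invertible: positive definiteness is open and closed in `s`.
theorem posDef_of_isPreconnected {s : Set (Matrix ι ι ℝ)} (hs : IsPreconnected s)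
    (hsymm : ∀ M ∈ s, M.IsSymm) (hunit : ∀ M ∈ s, IsUnit M) {M₀ M : Matrix ι ι ℝ}
    (hM₀s : M₀ ∈ s) (hM₀ : M₀.PosDef) (hM : M ∈ s) : M.PosDef := by
  have hherm : ∀ M ∈ s, M.IsHermitian := fun M hM => by
    rw [IsHermitian, conjTranspose_eq_transpose_of_trivial, hsymm M hM]
  refine .of_dotProduct_mulVec_pos (hherm M hM) ?_
  refine hs.subset_of_closure_inter_subset isOpen_setOf_forall_dotProduct_mulVec_pos
    ⟨M₀, hM₀s, fun _ => hM₀.dotProduct_mulVec_pos⟩ ?_ hM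
  rintro M' ⟨hclosure, hM'⟩
  have hnonneg (x : ι → ℝ) : 0 ≤ x ⬝ᵥ M' *ᵥ x := by
    refine closure_minimal (t := {N | 0 ≤ x ⬝ᵥ N *ᵥ x}) (fun N hN => ?_)
      (isClosed_le continuous_const (by fun_prop)) hclosure
    obtain rfl | hx := eq_or_ne x 0
    · simp
    · exact (hN x hx).le
  have hpsd : M'.PosSemidef := .of_dotProduct_mulVec_nonneg (hherm M' hM') hnonneg
  exact fun _ => (hpsd.posDef_iff_isUnit.mpr (hunit M' hM')).dotProduct_mulVec_pos

theorem isUnit_of_mul_add_mul_eq_smul_one {X S : Matrix ι ι ℝ} {c : ℝ} (hc : c ≠ 0)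
    (hX : X.IsSymm) (h : X * S + S * X = c • 1) : IsUnit X := by
  rw [isUnit_iff_isUnit_det, isUnit_iff_ne_zero]
  intro hdet
  obtain ⟨x, hx, hXx⟩ := exists_mulVec_eq_zero_iff.mpr hdet
  have hxX : x ᵥ* X = 0 := by rw [← mulVec_transpose, hX, hXx]
  have hzero : x ⬝ᵥ (X * S + S * X) *ᵥ x = 0 := by
    rw [add_mulVec, dotProduct_add, ← mulVec_mulVec, ← mulVec_mulVec, hXx, dotProduct_mulVec, hxX]
    simp
  rw [h, smul_mulVec, one_mulVec, dotProduct_smul, smul_eq_mul] at hzero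
  exact hx (dotProduct_self_eq_zero.mp ((mul_eq_zero.mp hzero).resolve_left hc))

theorem mul_eq_smul_one_of_posDef_of_mul_add_mul_eq {X S : Matrix ι ι ℝ} {c : ℝ} (hX : X.PosDef)
    (h : X * S + S * X = (2 * c) • 1) : X * S = c • 1 := by
  have hdet : IsUnit X.det := X.isUnit_iff_isUnit_det.mp hX.isUnit
  have hS : S - c • X⁻¹ = 0 := by
    refine eq_zero_of_posDef_of_mul_add_mul_eq_zero hX ?_
    calc X * (S - c • X⁻¹) + (S - c • X⁻¹) * X
        = X * S + S * X - (c • (X * X⁻¹) + c • (X⁻¹ * X)) := by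
          rw [Matrix.mul_sub, Matrix.sub_mul, mul_smul_comm, smul_mul_assoc]
          abel
      _ = 0 := by
          rw [h, mul_nonsing_inv X hdet, nonsing_inv_mul X hdet, two_mul, add_smul, sub_self]
  rw [sub_eq_zero.mp hS, mul_smul_comm, mul_nonsing_inv X hdet]

end PositiveDefinite

section QuadraticPerturbation

/-- The smaller root `(1 - √(1 - 2κθ²)) / θ` of `θ (κ + r² / 2) = r`: the radius of the ball in
which Newton-Kantorovich type arguments solve `J D + Q D = c` for `‖J⁻¹‖ ≤ θ`, `‖c‖ ≤ κ` and a
quadratic map `Q` of norm at most `1/2`. -/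
noncomputable def kantorovichRadius (θ κ : ℝ) : ℝ :=
  (1 - √(1 - 2 * κ * θ ^ 2)) / θ

variable {θ κ : ℝ}

theorem mul_kantorovichRadius (hθ : 0 < θ) :
    θ * kantorovichRadius θ κ = 1 - √(1 - 2 * κ * θ ^ 2) := by
  rw [kantorovichRadius, mul_div_cancel₀ _ hθ.ne']

theorem kantorovichRadius_nonneg (hθ : 0 < θ) (hκ : 0 ≤ κ) : 0 ≤ kantorovichRadius θ κ :=
  div_nonneg (sub_nonneg.mpr (Real.sqrt_le_one.mpr
    (by linarith [mul_nonneg hκ (sq_nonneg θ)]))) hθ.le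

theorem mul_kantorovichRadius_lt_one (hθ : 0 < θ) (hκθ : 2 * κ * θ ^ 2 < 1) :
    θ * kantorovichRadius θ κ < 1 := by
  rw [mul_kantorovichRadius hθ]
  linarith [Real.sqrt_pos.mpr (sub_pos.mpr hκθ)]

theorem mul_add_kantorovichRadius_sq (hθ : 0 < θ) (hκθ : 2 * κ * θ ^ 2 < 1) :
    θ * (κ + kantorovichRadius θ κ ^ 2 / 2) = kantorovichRadius θ κ := by
  have hsq := Real.sq_sqrt (sub_pos.mpr hκθ).le
  refine mul_left_cancel₀ hθ.ne' ?_
  calc θ * (θ * (κ + kantorovichRadius θ κ ^ 2 / 2))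
      = κ * θ ^ 2 + (θ * kantorovichRadius θ κ) ^ 2 / 2 := by ring
    _ = θ * kantorovichRadius θ κ := by
        rw [mul_kantorovichRadius hθ]
        linear_combination hsq / 2

theorem kantorovichRadius_le (hθ : 0 < θ) (hκ : 0 ≤ κ) (hκθ : 2 * κ * θ ^ 2 < 1) :
    kantorovichRadius θ κ ≤ 2 * κ * θ := by
  have hfix := mul_add_kantorovichRadius_sq hθ hκθ
  nlinarith [mul_nonneg (kantorovichRadius_nonneg hθ hκ)
    (sub_nonneg.mpr (mul_kantorovichRadius_lt_one hθ hκθ).le)]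

theorem two_mul_kantorovichRadius_div_le (hθ : 0 < θ) (hκ : 0 ≤ κ) {g : ℝ} (hg : 0 ≤ g) :
    2 * kantorovichRadius θ κ / g ≤ 4 * (1 - √(1 - 2 * κ * θ ^ 2)) / (θ * g) := by
  have hr := kantorovichRadius_nonneg hθ hκ
  rw [← mul_kantorovichRadius hθ, mul_left_comm, mul_div_mul_left _ _ hθ.ne']
  gcongr
  norm_num

theorem norm_sub_le_of_mem_closedBall {V W : Type*} [SeminormedAddCommGroup V]
    [SeminormedAddCommGroup W] {Q : V → W} {t : ℝ}
    (hQ : ∀ u v, ‖Q u - Q v‖ ≤ (‖u‖ + ‖v‖) / 2 * ‖u - v‖) {u v : V} (hu : ‖u‖ ≤ t) (hv : ‖v‖ ≤ t) :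
    ‖Q u - Q v‖ ≤ t * ‖u - v‖ :=
  (hQ u v).trans (by gcongr; linarith)

variable {V W : Type*} [NormedAddCommGroup V] [NormedSpace ℝ V] [NormedAddCommGroup W]
  [NormedSpace ℝ W] {J : V →ₗ[ℝ] W} {Q : V → W} {t : ℝ}

theorem mul_norm_sub_le_of_lipschitz_perturbation (hθ : 0 ≤ θ) (hJ : ∀ w, ‖w‖ ≤ θ * ‖J w‖)
    {u v : V} (huv : ‖Q u - Q v‖ ≤ t * ‖u - v‖) :
    (1 - θ * t) * ‖u - v‖ ≤ θ * ‖J u + Q u - (J v + Q v)‖ := by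
  have hbound : ‖u - v‖ ≤ θ * (‖J u + Q u - (J v + Q v)‖ + t * ‖u - v‖) := by
    calc ‖u - v‖ ≤ θ * ‖J (u - v)‖ := hJ _
      _ = θ * ‖J u + Q u - (J v + Q v) - (Q u - Q v)‖ := by rw [map_sub]; congr 2; abel
      _ ≤ θ * (‖J u + Q u - (J v + Q v)‖ + ‖Q u - Q v‖) := by gcongr; exact norm_sub_le _ _
      _ ≤ θ * (‖J u + Q u - (J v + Q v)‖ + t * ‖u - v‖) := by gcongr
  linarith

variable [CompleteSpace V]

-- A solution is a fixed point of `D ↦ K (c - Q D)`, where `K` is a right inverse of `J`; this is a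
-- contraction of the closed ball of radius `t`.
theorem exists_add_quadratic_eq (hJsurj : Function.Surjective J) (hθ : 0 ≤ θ)
    (hJ : ∀ w, ‖w‖ ≤ θ * ‖J w‖) (hQ0 : Q 0 = 0)
    (hQ : ∀ u v, ‖Q u - Q v‖ ≤ (‖u‖ + ‖v‖) / 2 * ‖u - v‖) (ht : 0 ≤ t) (hθt : θ * t < 1)
    (hκt : θ * (κ + t ^ 2 / 2) ≤ t) {c : W} (hc : ‖c‖ ≤ κ) :
    ∃ D, ‖D‖ ≤ t ∧ J D + Q D = c := by
  choose K hK using hJsurj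
  have hmaps : MapsTo (fun D => K (c - Q D)) (Metric.closedBall 0 t) (Metric.closedBall 0 t) := by
    intro D hD
    rw [mem_closedBall_zero_iff] at hD ⊢
    have hQD : ‖Q D‖ ≤ t ^ 2 / 2 := by
      have hQD := hQ D 0
      rw [hQ0, sub_zero, sub_zero, norm_zero, add_zero] at hQD
      nlinarith [norm_nonneg D]
    calc ‖K (c - Q D)‖ ≤ θ * ‖c - Q D‖ := by simpa only [hK] using hJ (K (c - Q D))
      _ ≤ θ * (κ + t ^ 2 / 2) := by gcongr; exact (norm_sub_le _ _).trans (by gcongr)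
      _ ≤ t := hκt
  have hcontr : ContractingWith (θ * t).toNNReal (hmaps.restrict _ _ _) := by
    refine ⟨by rwa [Real.toNNReal_lt_one], LipschitzWith.of_dist_le_mul fun u v => ?_⟩
    have huv := norm_sub_le_of_mem_closedBall hQ (mem_closedBall_zero_iff.mp v.2)
      (mem_closedBall_zero_iff.mp u.2)
    rw [Subtype.dist_eq, Subtype.dist_eq, dist_eq_norm, dist_eq_norm,
      Real.coe_toNNReal _ (by positivity)]
    calc ‖K (c - Q u) - K (c - Q v)‖ ≤ θ * ‖J (K (c - Q u) - K (c - Q v))‖ := hJ _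
      _ = θ * ‖Q v - Q u‖ := by rw [map_sub, hK, hK, sub_sub_sub_cancel_left]
      _ ≤ θ * (t * ‖(v : V) - u‖) := by gcongr
      _ = θ * t * ‖(u : V) - v‖ := by rw [norm_sub_rev, mul_assoc]
  obtain ⟨D, hD, hfix, -⟩ := hcontr.exists_fixedPoint' Metric.isClosed_closedBall.isComplete hmaps
    (Metric.mem_closedBall_self ht) (edist_ne_top _ _)
  refine ⟨D, mem_closedBall_zero_iff.mp hD, ?_⟩
  have hJD : J D = c - Q D := by rw [← hK (c - Q D)]; exact congrArg J hfix.symm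
  rw [hJD, sub_add_cancel]

theorem exists_lipschitz_path_add_quadratic_eq (hJsurj : Function.Surjective J) (hθ : 0 ≤ θ)
    (hJ : ∀ w, ‖w‖ ≤ θ * ‖J w‖) (hQ0 : Q 0 = 0)
    (hQ : ∀ u v, ‖Q u - Q v‖ ≤ (‖u‖ + ‖v‖) / 2 * ‖u - v‖) (ht : 0 ≤ t) (hθt : θ * t < 1)
    (hκt : θ * (κ + t ^ 2 / 2) ≤ t) {c : W} (hc : ‖c‖ ≤ κ) :
    ∃ (L : NNReal) (D : ℝ → V), LipschitzOnWith L D (Icc 0 1) ∧ D 0 = 0 ∧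
      ∀ s ∈ Icc (0 : ℝ) 1, ‖D s‖ ≤ t ∧ J (D s) + Q (D s) = s • c := by
  have hsc (s : ℝ) (hs : s ∈ Icc (0 : ℝ) 1) : ‖s • c‖ ≤ κ := by
    rw [norm_smul, Real.norm_of_nonneg hs.1]
    exact (mul_le_of_le_one_left (norm_nonneg c) hs.2).trans hc
  choose! D hD using fun s hs =>
    exists_add_quadratic_eq hJsurj hθ hJ hQ0 hQ ht hθt hκt (hsc s hs)
  have hlip {u v : V} (hu : ‖u‖ ≤ t) (hv : ‖v‖ ≤ t) :=
    mul_norm_sub_le_of_lipschitz_perturbation hθ hJ (norm_sub_le_of_mem_closedBall hQ hu hv)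
  refine ⟨(θ * ‖c‖ / (1 - θ * t)).toNNReal, D, LipschitzOnWith.of_dist_le_mul
    fun s hs s' hs' => ?_, ?_, hD⟩
  · have hss' := hlip (hD s hs).1 (hD s' hs').1
    rw [(hD s hs).2, (hD s' hs').2, ← sub_smul, norm_smul] at hss'
    rw [dist_eq_norm, dist_eq_norm, Real.coe_toNNReal _ (div_nonneg (by positivity)
      (sub_pos.mpr hθt).le), div_mul_eq_mul_div, le_div_iff₀ (sub_pos.mpr hθt)]
    linarith
  · have h0 := hD 0 ⟨le_rfl, zero_le_one⟩
    have hD0 := hlip h0.1 (norm_zero.trans_le ht)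
    rw [h0.2, hQ0, map_zero, add_zero, sub_zero, sub_zero, zero_smul, norm_zero, mul_zero] at hD0
    exact norm_le_zero_iff.mp (nonpos_of_mul_nonpos_right hD0 (sub_pos.mpr hθt))

end QuadraticPerturbation

section CentralPath

open scoped Matrix.Norms.Frobenius

/-- The space of symmetric real `n × n` matrices. -/
def symmMatrices (n : ℕ) : Submodule ℝ (Matrix (Fin n) (Fin n) ℝ) where
  carrier := {M | M.IsSymm}
  add_mem' := IsSymm.add
  zero_mem' := isSymm_zero
  smul_mem' c _ h := h.smul c

/-- The Jordan product `(X Y + Y X) / 2` of symmetric matrices. -/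
noncomputable def jordanProduct {n : ℕ} :
    symmMatrices n →ₗ[ℝ] symmMatrices n →ₗ[ℝ] symmMatrices n :=
  LinearMap.mk₂ ℝ
    (fun X Y => ⟨(1 / 2 : ℝ) • (X * Y + Y * X : Matrix (Fin n) (Fin n) ℝ), by
      have hX : (X : Matrix (Fin n) (Fin n) ℝ)ᵀ = X := X.2
      have hY : (Y : Matrix (Fin n) (Fin n) ℝ)ᵀ = Y := Y.2
      refine IsSymm.smul ?_ _
      rw [IsSymm, transpose_add, transpose_mul, transpose_mul, hX, hY, add_comm]⟩)
    (fun X X' Y => Subtype.ext <| by simp only [Submodule.coe_add, add_mul, mul_add]; module)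
    (fun c X Y => Subtype.ext <| by simp [smul_comm c])
    (fun X Y Y' => Subtype.ext <| by simp only [Submodule.coe_add, add_mul, mul_add]; module)
    (fun c X Y => Subtype.ext <| by simp [smul_comm c])

/-- The space `S^n × ℝ^m × S^n` with the norm `(‖ΔX‖² + ‖Δy‖² + ‖ΔS‖²)^(1/2)`. -/
abbrev Triple (n m : ℕ) : Type :=
  WithLp 2 (symmMatrices n × WithLp 2 (EuclideanSpace ℝ (Fin m) × symmMatrices n))

variable {n m : ℕ}

theorem coe_jordanProduct (X Y : symmMatrices n) :
    (jordanProduct X Y : Matrix (Fin n) (Fin n) ℝ) = (1 / 2 : ℝ) • (X * Y + Y * X) :=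
  rfl

theorem norm_jordanProduct_le (X Y : symmMatrices n) : ‖jordanProduct X Y‖ ≤ ‖X‖ * ‖Y‖ := by
  rw [Submodule.coe_norm, coe_jordanProduct, norm_smul, Real.norm_of_nonneg (by norm_num)]
  have hXY := frobenius_norm_mul (X : Matrix (Fin n) (Fin n) ℝ) (Y : Matrix (Fin n) (Fin n) ℝ)
  have hYX := frobenius_norm_mul (Y : Matrix (Fin n) (Fin n) ℝ) (X : Matrix (Fin n) (Fin n) ℝ)
  have hadd := norm_add_le (X * Y : Matrix (Fin n) (Fin n) ℝ) (Y * X)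
  simp only [Submodule.coe_norm] at *
  linarith

theorem Triple.ext {z w : Triple n m} (h₁ : z.fst = w.fst) (h₂ : z.snd.fst = w.snd.fst)
    (h₃ : z.snd.snd = w.snd.snd) : z = w :=
  WithLp.ofLp_injective _ (Prod.ext h₁ (WithLp.ofLp_injective _ (Prod.ext h₂ h₃)))

theorem Triple.norm_sq_eq (z : Triple n m) :
    ‖z‖ ^ 2 = ‖z.fst‖ ^ 2 + ‖z.snd.fst‖ ^ 2 + ‖z.snd.snd‖ ^ 2 := by
  rw [WithLp.prod_norm_sq_eq_of_L2, WithLp.prod_norm_sq_eq_of_L2, add_assoc]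

theorem Triple.norm_mul_add_norm_mul_le (z w : Triple n m) :
    ‖z.fst‖ * ‖w.snd.snd‖ + ‖w.fst‖ * ‖z.snd.snd‖ ≤ ‖z‖ * ‖w‖ := by
  refine le_of_sq_le_sq ?_ (by positivity)
  have hz : ‖z.fst‖ ^ 2 + ‖z.snd.snd‖ ^ 2 ≤ ‖z‖ ^ 2 := by
    rw [Triple.norm_sq_eq]; linarith [sq_nonneg ‖z.snd.fst‖]
  have hw : ‖w.fst‖ ^ 2 + ‖w.snd.snd‖ ^ 2 ≤ ‖w‖ ^ 2 := by
    rw [Triple.norm_sq_eq]; linarith [sq_nonneg ‖w.snd.fst‖]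
  calc (‖z.fst‖ * ‖w.snd.snd‖ + ‖w.fst‖ * ‖z.snd.snd‖) ^ 2
      ≤ (‖z.fst‖ ^ 2 + ‖z.snd.snd‖ ^ 2) * (‖w.fst‖ ^ 2 + ‖w.snd.snd‖ ^ 2) := by
        linarith [sq_nonneg (‖z.fst‖ * ‖w.fst‖ - ‖w.snd.snd‖ * ‖z.snd.snd‖)]
    _ ≤ ‖z‖ ^ 2 * ‖w‖ ^ 2 := by gcongr
    _ = (‖z‖ * ‖w‖) ^ 2 := (mul_pow _ _ _).symm

/-- The Jacobian `J(X, y, S)` of the optimality system. The components of its values are ordered as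
complementarity, primal feasibility, dual feasibility, so that they form a `Triple` again. -/
noncomputable def centralJacobian (A : Fin m → symmMatrices n) (X S : symmMatrices n) :
    Triple n m →ₗ[ℝ] Triple n m where
  toFun z := .toLp 2 (jordanProduct z.fst S + jordanProduct X z.snd.snd,
    .toLp 2 (.toLp 2 fun i => (A i * z.fst : Matrix (Fin n) (Fin n) ℝ).trace,
      ∑ i, z.snd.fst i • A i + z.snd.snd))
  map_add' z w := by
    refine Triple.ext ?_ ?_ ?_
    · simp only [WithLp.add_fst, WithLp.add_snd, map_add, LinearMap.add_apply, WithLp.toLp_fst]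
      abel
    · ext i
      simp [mul_add]
    · simp only [WithLp.add_fst, WithLp.add_snd, WithLp.toLp_snd, PiLp.add_apply, add_smul,
        Finset.sum_add_distrib]
      abel
  map_smul' c z := by
    refine Triple.ext ?_ ?_ ?_
    · simp
    · ext i
      simp
    · simp [mul_smul, Finset.smul_sum]

/-- The quadratic part `(ΔX ∘ ΔS, 0, 0)` of the optimality system. -/
noncomputable def centralQuadratic (z : Triple n m) : Triple n m :=
  .toLp 2 (jordanProduct z.fst z.snd.snd, 0)

theorem norm_centralQuadratic_sub_le (u v : Triple n m) :
    ‖centralQuadratic u - centralQuadratic v‖ ≤ (‖u‖ + ‖v‖) / 2 * ‖u - v‖ := by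
  have hpolar : centralQuadratic u - centralQuadratic v = (.toLp 2 ((1 / 2 : ℝ) •
      (jordanProduct (u - v).fst (u + v).snd.snd + jordanProduct (u + v).fst (u - v).snd.snd),
        0) : Triple n m) := by
    refine Triple.ext ?_ ?_ ?_
    · simp only [centralQuadratic, WithLp.sub_fst, WithLp.add_fst, WithLp.sub_snd, WithLp.add_snd,
        map_sub, map_add, LinearMap.sub_apply, LinearMap.add_apply, WithLp.toLp_fst]
      module
    · simp [centralQuadratic]
    · simp [centralQuadratic]
  rw [hpolar, WithLp.norm_toLp_fst, norm_smul, Real.norm_of_nonneg (by norm_num)]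
  calc 1 / 2 * ‖jordanProduct (u - v).fst (u + v).snd.snd +
        jordanProduct (u + v).fst (u - v).snd.snd‖
      ≤ 1 / 2 * (‖(u - v).fst‖ * ‖(u + v).snd.snd‖ + ‖(u + v).fst‖ * ‖(u - v).snd.snd‖) := by
        gcongr
        exact (norm_add_le _ _).trans
          (add_le_add (norm_jordanProduct_le _ _) (norm_jordanProduct_le _ _))
    _ ≤ 1 / 2 * (‖u - v‖ * ‖u + v‖) := by gcongr; exact Triple.norm_mul_add_norm_mul_le _ _
    _ ≤ 1 / 2 * (‖u - v‖ * (‖u‖ + ‖v‖)) := by gcongr; exact norm_add_le _ _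
    _ = (‖u‖ + ‖v‖) / 2 * ‖u - v‖ := by ring

theorem jordanProduct_add_add (A : Fin m → symmMatrices n) (X S : symmMatrices n)
    (z : Triple n m) :
    jordanProduct (X + z.fst) (S + z.snd.snd) =
      jordanProduct X S + (centralJacobian A X S z + centralQuadratic z).fst := by
  simp only [centralJacobian, centralQuadratic, map_add, LinearMap.add_apply, LinearMap.coe_mk,
    AddHom.coe_mk, WithLp.add_fst, WithLp.toLp_fst]
  abel

/-- `θ` bounds the inverse of the Jacobian `J(X, y, S)` on symmetric triples. The least such `θ` is
`thetaMu`. -/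
def IsJacobianInverseBound (A : Fin m → Matrix (Fin n) (Fin n) ℝ)
    (X S : Matrix (Fin n) (Fin n) ℝ) (θ : ℝ) : Prop :=
  0 ≤ θ ∧ ∀ (DX DS : Matrix (Fin n) (Fin n) ℝ) (Dy : Fin m → ℝ), DX.IsSymm → DS.IsSymm →
    √(frobNorm DX ^ 2 + (∑ i, Dy i ^ 2) + frobNorm DS ^ 2) ≤
      θ * √((∑ i, (A i * DX).trace ^ 2) + frobNorm ((∑ i, Dy i • A i) + DS) ^ 2 +
        frobNorm ((1 / 2 : ℝ) • (DX * S + S * DX + X * DS + DS * X)) ^ 2)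

-- The infimum `thetaMu` is `0` when no bound exists.
theorem isJacobianInverseBound_thetaMu {A : Fin m → Matrix (Fin n) (Fin n) ℝ}
    {X S : Matrix (Fin n) (Fin n) ℝ} (hθ : thetaMu A X S ≠ 0) :
    IsJacobianInverseBound A X S (thetaMu A X S) := by
  have hne : {t | IsJacobianInverseBound A X S t}.Nonempty := by
    by_contra hempty
    refine hθ ?_
    change sInf {t | IsJacobianInverseBound A X S t} = 0
    rw [not_nonempty_iff_eq_empty.mp hempty, Real.sInf_empty]
  have hclosed : IsClosed {t | IsJacobianInverseBound A X S t} := by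
    simp only [IsJacobianInverseBound, ofPred_and, ofPred_forall]
    refine isClosed_Ici.inter (isClosed_iInter fun DX => isClosed_iInter fun DS =>
      isClosed_iInter fun Dy => isClosed_iInter fun _ => isClosed_iInter fun _ => ?_)
    exact isClosed_le continuous_const (by fun_prop)
  exact hclosed.csInf_mem hne ⟨0, fun t ht => ht.1⟩

theorem IsJacobianInverseBound.pos {A : Fin m → Matrix (Fin n) (Fin n) ℝ}
    {X S : Matrix (Fin n) (Fin n) ℝ} {θ : ℝ} (h : IsJacobianInverseBound A X S θ) (hn : 0 < n) :
    0 < θ := by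
  refine h.1.lt_of_ne' fun hθ => ?_
  have hone := h.2 1 0 0 isSymm_one isSymm_zero
  have hnorm : frobNorm (1 : Matrix (Fin n) (Fin n) ℝ) ^ 2 = n := by
    rw [frobNorm_eq_norm, frobenius_norm_sq_eq_trace]
    simp
  rw [hθ, zero_mul, Real.sqrt_le_left le_rfl, hnorm] at hone
  have hn' : (0 : ℝ) < n := Nat.cast_pos.mpr hn
  have hy : 0 ≤ ∑ i, (0 : Fin m → ℝ) i ^ 2 := by positivity
  linarith [sq_nonneg (frobNorm (0 : Matrix (Fin n) (Fin n) ℝ))]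

theorem IsJacobianInverseBound.norm_le {A : Fin m → symmMatrices n} {X S : symmMatrices n} {θ : ℝ}
    (h : IsJacobianInverseBound (fun i => (A i : Matrix (Fin n) (Fin n) ℝ)) X S θ)
    (z : Triple n m) : ‖z‖ ≤ θ * ‖centralJacobian A X S z‖ := by
  convert h.2 z.fst z.snd.snd z.snd.fst z.fst.2 z.snd.snd.2 using 1
  · rw [← Real.sqrt_sq (norm_nonneg z), Triple.norm_sq_eq, EuclideanSpace.real_norm_sq_eq,
      frobNorm_eq_norm, frobNorm_eq_norm]
    rfl
  · rw [← Real.sqrt_sq (norm_nonneg (centralJacobian A X S z)), Triple.norm_sq_eq,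
      EuclideanSpace.real_norm_sq_eq, frobNorm_eq_norm, frobNorm_eq_norm, add_rotate]
    have hfst : ((centralJacobian A X S z).fst : Matrix (Fin n) (Fin n) ℝ) = (1 / 2 : ℝ) •
        (z.fst * S + S * z.fst + X * z.snd.snd + z.snd.snd * X) := by
      simp [centralJacobian, coe_jordanProduct, ← smul_add, add_assoc]
    have hsnd : ((centralJacobian A X S z).snd.snd : Matrix (Fin n) (Fin n) ℝ) =
        (∑ i, z.snd.fst i • (A i : Matrix (Fin n) (Fin n) ℝ)) + z.snd.snd := by
      simp [centralJacobian]
    rw [← hfst, ← hsnd]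
    rfl

theorem IsJacobianInverseBound.surjective {A : Fin m → symmMatrices n} {X S : symmMatrices n}
    {θ : ℝ} (h : IsJacobianInverseBound (fun i => (A i : Matrix (Fin n) (Fin n) ℝ)) X S θ) :
    Function.Surjective (centralJacobian A X S) := by
  refine LinearMap.surjective_of_injective ((injective_iff_map_eq_zero _).mpr fun z hz => ?_)
  have hz' := h.norm_le z
  rwa [hz, norm_zero, mul_zero, norm_le_zero_iff] at hz'

theorem lipschitzWith_fst_apply (i j : Fin n) :
    LipschitzWith 1 fun z : Triple n m => (z.fst : Matrix (Fin n) (Fin n) ℝ) i j := by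
  refine LipschitzWith.of_dist_le_mul fun z w => ?_
  rw [NNReal.coe_one, one_mul, Real.dist_eq, dist_eq_norm]
  calc |(z.fst : Matrix (Fin n) (Fin n) ℝ) i j - (w.fst : Matrix (Fin n) (Fin n) ℝ) i j|
      ≤ ‖(z - w).fst‖ := abs_apply_le_frobenius_norm ((z - w).fst : Matrix (Fin n) (Fin n) ℝ) i j
    _ ≤ ‖z - w‖ := WithLp.norm_fst_le _ _

-- Along the path the matrices `X + ΔX` solve a Lyapunov equation, so they are invertible and
-- therefore remain positive definite.
theorem posDef_add_fst_of_lipschitz_path {A : Fin m → symmMatrices n} {X S : symmMatrices n}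
    {μ : ℝ} (hμ : μ ≠ 0) (hX : (X : Matrix (Fin n) (Fin n) ℝ).PosDef)
    (hXS : (jordanProduct X S : Matrix (Fin n) (Fin n) ℝ) = μ • 1) {L : NNReal}
    {D : ℝ → Triple n m} (hD : LipschitzOnWith L D (Icc 0 1)) (hD0 : D 0 = 0)
    (hsol : ∀ s ∈ Icc (0 : ℝ) 1,
      (centralJacobian A X S (D s) + centralQuadratic (D s)).fst = 0) :
    (X + (D 1).fst : Matrix (Fin n) (Fin n) ℝ).PosDef ∧
      (X + (D 1).fst : Matrix (Fin n) (Fin n) ℝ) * (S + (D 1).snd.snd) = μ • 1 := by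
  let F : ℝ → Matrix (Fin n) (Fin n) ℝ := fun s => X + (D s).fst
  have hF : ContinuousOn F (Icc 0 1) := continuousOn_pi.mpr fun i => continuousOn_pi.mpr fun j =>
    continuousOn_const.add ((lipschitzWith_fst_apply i j).comp_lipschitzOnWith hD).continuousOn
  have hsymm (s : ℝ) : (F s).IsSymm := (X + (D s).fst).2
  have hlyap : ∀ s ∈ Icc (0 : ℝ) 1,
      F s * (S + (D s).snd.snd) + (S + (D s).snd.snd) * F s = (2 * μ) • 1 := by
    intro s hs
    have hjordan := congrArg Subtype.val (jordanProduct_add_add A X S (D s))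
    rw [hsol s hs, add_zero, hXS, coe_jordanProduct] at hjordan
    rw [mul_smul, ← hjordan, smul_smul]
    norm_num [F]
  have hone : (1 : ℝ) ∈ Icc 0 1 := ⟨zero_le_one, le_rfl⟩
  have hpos : (F 1).PosDef := by
    refine posDef_of_isPreconnected (isPreconnected_Icc.image F hF) ?_ ?_
      (mem_image_of_mem F ⟨le_rfl, zero_le_one⟩) ?_ (mem_image_of_mem F hone)
    · rintro _ ⟨s, -, rfl⟩
      exact hsymm s
    · rintro _ ⟨s, hs, rfl⟩
      exact isUnit_of_mul_add_mul_eq_smul_one (mul_ne_zero two_ne_zero hμ) (hsymm s) (hlyap s hs)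
    · simpa [F, hD0] using hX
  exact ⟨hpos, mul_eq_smul_one_of_posDef_of_mul_add_mul_eq hpos (hlyap 1 hone)⟩

theorem IsJacobianInverseBound.exists_add_mul_add_eq_smul_one {A : Fin m → symmMatrices n}
    {X S : symmMatrices n} {θ κ μ : ℝ}
    (h : IsJacobianInverseBound (fun i => (A i : Matrix (Fin n) (Fin n) ℝ)) X S θ) (hθ : 0 < θ)
    (hκθ : 2 * κ * θ ^ 2 < 1) (hμ : μ ≠ 0) (hX : (X : Matrix (Fin n) (Fin n) ℝ).PosDef)
    (hXS : (jordanProduct X S : Matrix (Fin n) (Fin n) ℝ) = μ • 1)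
    {w : WithLp 2 (EuclideanSpace ℝ (Fin m) × symmMatrices n)} (hw : ‖w‖ ≤ κ) :
    ∃ z : Triple n m, ‖z‖ ≤ kantorovichRadius θ κ ∧ (centralJacobian A X S z).snd = w ∧
      (X + z.fst : Matrix (Fin n) (Fin n) ℝ).PosDef ∧
      (X + z.fst : Matrix (Fin n) (Fin n) ℝ) * (S + z.snd.snd) = μ • 1 := by
  have hκ : 0 ≤ κ := (norm_nonneg w).trans hw
  obtain ⟨L, D, hDlip, hD0, hD⟩ := exists_lipschitz_path_add_quadratic_eq h.surjective hθ.le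
    h.norm_le (by simp [centralQuadratic]) norm_centralQuadratic_sub_le
    (kantorovichRadius_nonneg hθ hκ) (mul_kantorovichRadius_lt_one hθ hκθ)
    (mul_add_kantorovichRadius_sq hθ hκθ).le (c := (.toLp 2 (0, w) : Triple n m))
    ((WithLp.norm_toLp_snd _ _ _ w).trans_le hw)
  obtain ⟨hDle, hDsol⟩ := hD 1 ⟨zero_le_one, le_rfl⟩
  refine ⟨D 1, hDle, ?_,
    posDef_add_fst_of_lipschitz_path (A := A) hμ hX hXS hDlip hD0 fun s hs => ?_⟩
  · simpa [centralQuadratic] using congrArg WithLp.snd hDsol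
  · rw [(hD s hs).2, WithLp.smul_fst, WithLp.toLp_fst, smul_zero]

theorem posDef_of_mul_eq_smul_one {X S : Matrix (Fin n) (Fin n) ℝ} {μ : ℝ} (hμ : 0 < μ)
    (hX : X.PosDef) (h : X * S = μ • 1) : S.PosDef := by
  have hdet : IsUnit X.det := X.isUnit_iff_isUnit_det.mp hX.isUnit
  have hS : S = μ • X⁻¹ := by
    rw [← Matrix.one_mul S, ← nonsing_inv_mul X hdet, Matrix.mul_assoc, h, mul_smul_comm,
      Matrix.mul_one]
  rw [hS]
  exact hX.inv.smul hμ

theorem CentralSol.posDef {C Cbar : Matrix (Fin n) (Fin n) ℝ}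
    {A : Fin m → Matrix (Fin n) (Fin n) ℝ} {b : Fin m → ℝ} {ε μ : ℝ}
    {X S : Matrix (Fin n) (Fin n) ℝ} {y : Fin m → ℝ} (h : CentralSol C Cbar A b ε μ X y S)
    (hμ : 0 < μ) : X.PosDef := by
  refine h.1.2.2.posDef_iff_isUnit.mpr (IsUnit.of_mul_eq_one (μ⁻¹ • S) ?_)
  rw [mul_smul_comm, h.2.2, smul_smul, inv_mul_cancel₀ hμ.ne', one_smul]

theorem CentralSol.mul_comm {C Cbar : Matrix (Fin n) (Fin n) ℝ}
    {A : Fin m → Matrix (Fin n) (Fin n) ℝ} {b : Fin m → ℝ} {ε μ : ℝ}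
    {X S : Matrix (Fin n) (Fin n) ℝ} {y : Fin m → ℝ} (h : CentralSol C Cbar A b ε μ X y S) :
    S * X = μ • 1 := by
  have hSX := congrArg transpose h.2.2
  rwa [transpose_mul, h.2.1.1, h.1.1, transpose_smul, transpose_one] at hSX

theorem CentralSol.exists_perturbation {C Cbar : Matrix (Fin n) (Fin n) ℝ}
    {A : Fin m → Matrix (Fin n) (Fin n) ℝ} {b : Fin m → ℝ} {ε μ θ : ℝ}
    {X S : Matrix (Fin n) (Fin n) ℝ} {y : Fin m → ℝ} (h : CentralSol C Cbar A b 0 μ X y S)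
    (hCbar : Cbar.IsSymm) (hA : ∀ i, (A i).IsSymm) (hμ : 0 < μ)
    (hJ : IsJacobianInverseBound A X S θ) (hθ : 0 < θ) (hε : 2 * (|ε| * ‖Cbar‖) * θ ^ 2 < 1) :
    ∃ X' S' y', CentralSol C Cbar A b ε μ X' y' S' ∧
      ‖X' - X‖ ≤ kantorovichRadius θ (|ε| * ‖Cbar‖) ∧
      ‖S' - S‖ ≤ kantorovichRadius θ (|ε| * ‖Cbar‖) := by
  have hXpos := h.posDef hμ
  have hSX := h.mul_comm
  obtain ⟨⟨hX, hAX, -⟩, ⟨hS, hdual, -⟩, hXS⟩ := h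
  lift X to symmMatrices n using hX
  lift S to symmMatrices n using hS
  lift A to Fin m → symmMatrices n using hA
  let w : WithLp 2 (EuclideanSpace ℝ (Fin m) × symmMatrices n) := .toLp 2 (0, ε • ⟨Cbar, hCbar⟩)
  have hw : ‖w‖ ≤ |ε| * ‖Cbar‖ := by
    rw [WithLp.norm_toLp_snd, norm_smul]
    rfl
  obtain ⟨z, hz, hzw, hpos, hmul⟩ := hJ.exists_add_mul_add_eq_smul_one hθ hε hμ.ne' hXpos
    (by rw [coe_jordanProduct, hXS, hSX]; module) hw
  have hprimal (i : Fin m) : (A i * z.fst : Matrix (Fin n) (Fin n) ℝ).trace = 0 :=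
    congrArg (fun v => v.fst i) hzw
  have hdual' : ∑ i, z.snd.fst i • (A i : Matrix (Fin n) (Fin n) ℝ) + z.snd.snd = ε • Cbar := by
    simpa [centralJacobian, w] using congrArg (fun v => (v.snd : Matrix (Fin n) (Fin n) ℝ)) hzw
  refine ⟨X + z.fst, S + z.snd.snd, y + z.snd.fst.ofLp, ⟨⟨(X + z.fst).2, fun i => ?_,
    hpos.posSemidef⟩, ⟨(S + z.snd.snd).2, ?_, (posDef_of_mul_eq_smul_one hμ hpos hmul).posSemidef⟩,
    hmul⟩, ?_, ?_⟩
  · rw [Matrix.mul_add, trace_add, hAX, hprimal, add_zero]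
  · simp only [Pi.add_apply, add_smul, Finset.sum_add_distrib]
    rw [add_add_add_comm, hdual, hdual', zero_smul, add_zero]
  · rw [add_sub_cancel_left]
    exact (WithLp.norm_fst_le _ z).trans hz
  · rw [add_sub_cancel_left]
    exact ((WithLp.norm_snd_le _ z.snd).trans (WithLp.norm_snd_le _ z)).trans hz

-- Division by zero makes the bound on `|ε|` vanish for `θ = 0` and for `F = 0`.
theorem mul_lt_of_abs_lt_one_div_mul_min {ε θ F δ gX gS : ℝ} (hθ : 0 ≤ θ) (hF : 0 ≤ F)
    (hε : |ε| < (1 / (θ * F)) *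
      min (min (δ / 2) (1 / (2 * θ))) (min (gX / 10) (gS / 10))) :
    θ ≠ 0 ∧ 2 * |ε| * θ ^ 2 * F < 1 ∧ 4 * |ε| * θ * F < gX ∧ 4 * |ε| * θ * F < gS := by
  have hθF0 : θ * F ≠ 0 := by
    intro h
    rw [h, div_zero, zero_mul] at hε
    exact hε.not_ge (abs_nonneg ε)
  have hθF : 0 < θ * F := (mul_nonneg hθ hF).lt_of_ne' hθF0
  have hθ0 : θ ≠ 0 := left_ne_zero_of_mul hθF0
  rw [one_div_mul_eq_div, lt_div_iff₀ hθF, lt_min_iff, lt_min_iff, lt_min_iff] at hε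
  obtain ⟨⟨-, hεθ⟩, hεX, hεS⟩ := hε
  have hnonneg : 0 ≤ |ε| * (θ * F) := by positivity
  refine ⟨hθ0, ?_, by linarith, by linarith⟩
  rw [lt_div_iff₀ (by positivity)] at hεθ
  linarith

theorem stmt12_general {n m : ℕ} (C Cbar : Matrix (Fin n) (Fin n) ℝ)
    (A : Fin m → Matrix (Fin n) (Fin n) ℝ) (b : Fin m → ℝ)
    (hCbar : Cbar.IsSymm) (hA : ∀ i, (A i).IsSymm) (μ : ℝ) (hμ : 0 < μ)
    (Xμ Sμ : Matrix (Fin n) (Fin n) ℝ) (yμ : Fin m → ℝ)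
    (hcent : CentralSol C Cbar A b 0 μ Xμ yμ Sμ)
    (θ : ℝ) (hθ : IsJacobianInverseBound A Xμ Sμ θ)
    (k l : ℕ) (hk : 1 ≤ k) (hkn : k < n) (hl : 1 ≤ l) (hln : l < n)
    (φ ψ : Fin n → ℝ) (QX QS : Matrix (Fin n) (Fin n) ℝ)
    (hQX : IsSortedDiagonalization Xμ QX φ) (hQS : IsSortedDiagonalization Sμ QS ψ)
    (gX gS : ℝ) (hgX : gX = φ ⟨k - 1, by omega⟩ - φ ⟨k, hkn⟩)
    (hgS : gS = ψ ⟨l - 1, by omega⟩ - ψ ⟨l, hln⟩)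
    (ε : ℝ) (hεθ : 2 * |ε| * θ ^ 2 * frobNorm Cbar < 1)
    (hεX : 4 * |ε| * θ * frobNorm Cbar < gX) (hεS : 4 * |ε| * θ * frobNorm Cbar < gS) :
    ∃ (Xε Sε : Matrix (Fin n) (Fin n) ℝ) (yε : Fin m → ℝ),
      CentralSol C Cbar A b ε μ Xε yε Sε ∧
      ∃ (ν ζ : Fin n → ℝ) (PX PS : Matrix (Fin n) (Fin n) ℝ),
        Antitone ν ∧ Antitone ζ ∧ PXᵀ * PX = 1 ∧ PSᵀ * PS = 1 ∧
        Xε * PX = PX * Matrix.diagonal ν ∧ Sε * PS = PS * Matrix.diagonal ζ ∧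
        ν ⟨k, hkn⟩ < ν ⟨k - 1, by omega⟩ ∧ ζ ⟨l, hln⟩ < ζ ⟨l - 1, by omega⟩ ∧
        specNorm ((QX.submatrix id (Fin.castLE hkn.le)) *
              (QX.submatrix id (Fin.castLE hkn.le))ᵀ -
            (PX.submatrix id (Fin.castLE hkn.le)) *
              (PX.submatrix id (Fin.castLE hkn.le))ᵀ) ≤
          4 * (1 - √(1 - 2 * |ε| * θ ^ 2 * frobNorm Cbar)) / (θ * gX) ∧
        specNorm ((QS.submatrix id (Fin.castLE hln.le)) *
              (QS.submatrix id (Fin.castLE hln.le))ᵀ -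
            (PS.submatrix id (Fin.castLE hln.le)) *
              (PS.submatrix id (Fin.castLE hln.le))ᵀ) ≤
          4 * (1 - √(1 - 2 * |ε| * θ ^ 2 * frobNorm Cbar)) / (θ * gS) := by
  have hθ0 : 0 < θ := hθ.pos (by omega)
  have hεκ : 2 * |ε| * θ ^ 2 * frobNorm Cbar = 2 * (|ε| * ‖Cbar‖) * θ ^ 2 := by
    rw [frobNorm_eq_norm]
    ring
  rw [hεκ] at hεθ ⊢
  rw [frobNorm_eq_norm] at hεX hεS
  set κ := |ε| * ‖Cbar‖
  have hκ : 0 ≤ κ := by positivity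
  have hr : kantorovichRadius θ κ ≤ 2 * κ * θ := kantorovichRadius_le hθ0 hκ hεθ
  have hrX : 2 * kantorovichRadius θ κ < gX := by linarith
  have hrS : 2 * kantorovichRadius θ κ < gS := by linarith
  obtain ⟨X', S', y', hcent', hX', hS'⟩ := hcent.exists_perturbation hCbar hA hμ hθ hθ0 hεθ
  obtain ⟨PX, ν, hPX⟩ := exists_isSortedDiagonalization hcent'.1.1
  obtain ⟨PS, ζ, hPS⟩ := exists_isSortedDiagonalization hcent'.2.1.1
  exact ⟨X', S', y', hcent', ν, ζ, PX, PS, hPX.antitone, hPS.antitone, hPX.orthogonal,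
    hPS.orthogonal, hPX.mul_eq, hPS.mul_eq, hQX.eigenvalue_lt_of_norm_sub_le hPX hX' (hgX ▸ hrX),
    hQS.eigenvalue_lt_of_norm_sub_le hPS hS' (hgS ▸ hrS),
    (hQX.specNorm_sub_le hPX hk hkn hgX hX' hrX).trans
      (two_mul_kantorovichRadius_div_le hθ0 hκ (by linarith [kantorovichRadius_nonneg hθ0 hκ])),
    (hQS.specNorm_sub_le hPS hl hln hgS hS' hrS).trans
      (two_mul_kantorovichRadius_div_le hθ0 hκ (by linarith [kantorovichRadius_nonneg hθ0 hκ]))⟩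

end CentralPath

/-- sensitivity of the approximation of the optimal partition:
the dominant eigenspaces of the perturbed central solution stay close to those of the
unperturbed one. -/
theorem stmt12 {n m : ℕ} (C Cbar : Matrix (Fin n) (Fin n) ℝ)
    (A : Fin m → Matrix (Fin n) (Fin n) ℝ) (b : Fin m → ℝ)
    (hSA : StandingAssumptions C Cbar A b) (hCbar0 : Cbar ≠ 0)
    (μ : ℝ) (hμ : 0 < μ)
    (Xμ Sμ : Matrix (Fin n) (Fin n) ℝ) (yμ : Fin m → ℝ)
    (hcent : CentralSol C Cbar A b 0 μ Xμ yμ Sμ)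
    (Xs Ss : Matrix (Fin n) (Fin n) ℝ) (ys : Fin m → ℝ)
    (hmc : MaxComp C Cbar A b 0 Xs ys Ss)
    (nB nT nN : ℕ)
    (hnB : nB = Module.finrank ℝ (LinearMap.range Xs.mulVecLin))
    (hnN : nN = Module.finrank ℝ (LinearMap.range Ss.mulVecLin))
    (hnT : nB + nT + nN = n)
    (hnB1 : 1 ≤ nB) (hnBn : nB < n) (hnN1 : 1 ≤ nN) (hnNn : nN < n)
    (φ ψ : Fin n → ℝ) (hφ : Antitone φ) (hψ : Antitone ψ)
    (QX QS : Matrix (Fin n) (Fin n) ℝ)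
    (hQXorth : QXᵀ * QX = 1) (hQXd : Xμ * QX = QX * Matrix.diagonal φ)
    (hQSorth : QSᵀ * QS = 1) (hQSd : Sμ * QS = QS * Matrix.diagonal ψ)
    (δ θ : ℝ)
    (hδ : δ = sInf ((fun i : Fin n => φ i) '' {i : Fin n | (i : ℕ) < nB + nT} ∪
      (fun i : Fin n => ψ i) '' {i : Fin n | (i : ℕ) < nN}))
    (hθ : θ = thetaMu A Xμ Sμ)
    (gX gS : ℝ)
    (hgX : gX = φ ⟨nB - 1, by omega⟩ - φ ⟨nB, hnBn⟩) (hgXpos : 0 < gX)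
    (hgS : gS = ψ ⟨nN - 1, by omega⟩ - ψ ⟨nN, hnNn⟩) (hgSpos : 0 < gS)
    (ε : ℝ)
    (hε : |ε| < (1 / (θ * frobNorm Cbar)) *
      min (min (δ / 2) (1 / (2 * θ))) (min (gX / 10) (gS / 10))) :
    ∃ (Xε Sε : Matrix (Fin n) (Fin n) ℝ) (yε : Fin m → ℝ),
      CentralSol C Cbar A b ε μ Xε yε Sε ∧
      ∃ (ν ζ : Fin n → ℝ) (PX PS : Matrix (Fin n) (Fin n) ℝ),
        Antitone ν ∧ Antitone ζ ∧ PXᵀ * PX = 1 ∧ PSᵀ * PS = 1 ∧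
        Xε * PX = PX * Matrix.diagonal ν ∧ Sε * PS = PS * Matrix.diagonal ζ ∧
        -- the `n_B` (resp. `n_N`) largest eigenvalues are strictly larger than the rest
        ν ⟨nB, hnBn⟩ < ν ⟨nB - 1, by omega⟩ ∧
        ζ ⟨nN, hnNn⟩ < ζ ⟨nN - 1, by omega⟩ ∧
        specNorm ((QX.submatrix id (Fin.castLE hnBn.le)) *
              (QX.submatrix id (Fin.castLE hnBn.le))ᵀ -
            (PX.submatrix id (Fin.castLE hnBn.le)) *
              (PX.submatrix id (Fin.castLE hnBn.le))ᵀ) ≤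
          4 * (1 - Real.sqrt (1 - 2 * |ε| * θ ^ 2 * frobNorm Cbar)) / (θ * gX) ∧
        specNorm ((QS.submatrix id (Fin.castLE hnNn.le)) *
              (QS.submatrix id (Fin.castLE hnNn.le))ᵀ -
            (PS.submatrix id (Fin.castLE hnNn.le)) *
              (PS.submatrix id (Fin.castLE hnNn.le))ᵀ) ≤
          4 * (1 - Real.sqrt (1 - 2 * |ε| * θ ^ 2 * frobNorm Cbar)) / (θ * gS) := by
  subst hθ
  obtain ⟨hθ, hεθ, hεX, hεS⟩ := mul_lt_of_abs_lt_one_div_mul_min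
    (Real.sInf_nonneg fun _ ht => ht.1) (Real.sqrt_nonneg _) hε
  exact stmt12_general C Cbar A b hSA.2.1 hSA.2.2.1 μ hμ Xμ Sμ yμ hcent _
    (isJacobianInverseBound_thetaMu hθ) nB nN hnB1 hnBn hnN1 hnNn φ ψ QX QS ⟨hφ, hQXorth, hQXd⟩
    ⟨hψ, hQSorth, hQSd⟩ gX gS hgX hgS ε hεθ hεX hεS
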